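/- Let f ∈ ℱ, let M be a model of T_{0,f}, let n < ω, let b_0, …, b_n ∈ Q^M, let k* be minimal such that f(k*) > n, and for each i ≤ n let s_i ∈ 𝒮_{f,k*+1} be the unique element with b_i ∈ Q^M_{s_i}. Then the following are equivalent: (i) there exist a model N of T_{0,f}, an embedding ι : M → N, and an element a ∈ P^N such that R^N(ι(b_i), a) holds for all i ≤ n; (ii) there exists ν ∈ 𝒯_{f,k*+1} with ν ∈ s_i for all i ≤ n. -/

import Mathlib

/-- `η ∈ 𝒯_f` : a finite sequence with `η(ℓ) ≤ f(ℓ)` for all `ℓ < lg(η)`. -/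
def inT (f : ℕ → ℕ) (η : List ℕ) : Prop := ∀ i : Fin η.length, η.get i ≤ f i

/-- `𝒯_{f,k}` : elements of `𝒯_f` of length exactly `k`. -/
def Tk (f : ℕ → ℕ) (k : ℕ) : Set (List ℕ) := {η | η.length = k ∧ inT f η}

/-- `𝒯_{f,[k]}` : elements of `𝒯_f` of length at most `k`. -/
def Tle (f : ℕ → ℕ) (k : ℕ) : Set (List ℕ) := {η | η.length ≤ k ∧ inT f η}

/-- `𝒯_f = ⋃_k 𝒯_{f,k}`. -/
def Tf (f : ℕ → ℕ) : Set (List ℕ) := {η | inT f η}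

/-- The conditions on `s ⊆ 𝒯_{f,[k]}` prior to maximality: nonempty, closed
under initial segment, every `⊴`-maximal node is in `𝒯_{f,k}`, and `s`
contains no full splitting `{ρ⌢⟨ℓ⟩ : ℓ ≤ f(lg ρ)}`. -/
def SBase (f : ℕ → ℕ) (k : ℕ) (s : Set (List ℕ)) : Prop :=
  s ⊆ Tle f k ∧ s.Nonempty ∧
  (∀ η ∈ s, ∀ ρ : List ℕ, ρ <+: η → ρ ∈ s) ∧
  (∀ ρ ∈ s, (∀ η ∈ s, ρ <+: η → η = ρ) → ρ.length = k) ∧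
  (∀ ρ ∈ Tle f k, ¬ ∀ ℓ ≤ f ρ.length, ρ ++ [ℓ] ∈ s)

/-- `𝒮_{f,k}` : the `k`-maximal subsets of `𝒯_{f,[k]}`, i.e. those satisfying
`SBase` and maximal under inclusion subject to it. -/
def Sk (f : ℕ → ℕ) (k : ℕ) : Set (Set (List ℕ)) :=
  {s | SBase f k s ∧ ∀ s', SBase f k s' → s ⊆ s' → s' = s}

/-- `𝒮_f = ⋃_{k ≥ 1} 𝒮_{f,k}`. -/
def Sf (f : ℕ → ℕ) : Set (Set (List ℕ)) := {s | ∃ k, 1 ≤ k ∧ s ∈ Sk f k}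

/-- The restriction `η ↾ k = ⟨η 0, …, η (k-1)⟩` of `η : ℕ → ℕ`. -/
def restr (η : ℕ → ℕ) (k : ℕ) : List ℕ := List.map η (List.range k)

/-- `lim(𝒯_f)` : branches of `𝒯_f`. -/
def limT (f : ℕ → ℕ) : Set (ℕ → ℕ) := {η | ∀ k, restr η k ∈ Tk f k}

/-- `lim(𝒮_f)` : sequences `⟨s_k : 1 ≤ k < ω⟩` with `s_k ∈ 𝒮_{f,k}`,
increasing under inclusion (the value at `0` is irrelevant). -/
def limS (f : ℕ → ℕ) : Set (ℕ → Set (List ℕ)) :=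
  {ν | (∀ k, 1 ≤ k → ν k ∈ Sk f k) ∧ ∀ k k', 1 ≤ k → k < k' → ν k ⊆ ν k'}

universe u

/-- An interpretation of the vocabulary
`τ = {P, Q, R, P_η (η ∈ 𝒯_f), Q_s (s ∈ 𝒮_f)}` on a domain `M`.
(The values of `Pn`/`Qs` off `𝒯_f`/`𝒮_f` are irrelevant.) -/
structure T0Str (M : Type u) where
  P : Set M
  Q : Set M
  Pn : List ℕ → Set M
  Qs : Set (List ℕ) → Set M
  R : M → M → Prop

/-- `S` is a model of the universal theory `T_{0,f}` (Definition 2.3). -/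
def IsModelT0 (f : ℕ → ℕ) {M : Type u} (S : T0Str M) : Prop :=
  -- (a) P, Q partition M
  (S.P ∪ S.Q = Set.univ ∧ Disjoint S.P S.Q) ∧
  -- (b) for each k, ⟨P_η : η ∈ 𝒯_{f,k}⟩ partitions P
  (∀ k, (⋃ η ∈ Tk f k, S.Pn η) = S.P ∧
    ∀ η ∈ Tk f k, ∀ η' ∈ Tk f k, η ≠ η' → Disjoint (S.Pn η) (S.Pn η')) ∧
  -- (c) for each k ≥ 1, ⟨Q_s : s ∈ 𝒮_{f,k}⟩ partitions Q
  (∀ k, 1 ≤ k → (⋃ s ∈ Sk f k, S.Qs s) = S.Q ∧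
    ∀ s ∈ Sk f k, ∀ s' ∈ Sk f k, s ≠ s' → Disjoint (S.Qs s) (S.Qs s')) ∧
  -- (d) monotonicity
  (∀ η ∈ Tf f, ∀ η' ∈ Tf f, η <+: η' → S.Pn η' ⊆ S.Pn η) ∧
  (∀ s ∈ Sf f, ∀ s' ∈ Sf f, s ⊆ s' → S.Qs s' ⊆ S.Qs s) ∧
  -- (e) R ⊆ Q × P
  (∀ b a, S.R b a → b ∈ S.Q ∧ a ∈ S.P) ∧
  -- (e) no element of Q connects into every piece of a successor partition
  (∀ k, ∀ η ∈ Tk f k, ∀ bv : ℕ → M,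
    (∀ ℓ ≤ f k, bv ℓ ∈ S.Pn (η ++ [ℓ])) →
      ¬ ∃ x ∈ S.Q, ∀ ℓ ≤ f k, S.R x (bv ℓ)) ∧
  -- (e) edges from Q_s go only into P_η with η ∈ s
  (∀ b a, S.R b a → ∀ k, 1 ≤ k → ∀ s ∈ Sk f k, b ∈ S.Qs s →
    ∀ η ∈ Tk f k, a ∈ S.Pn η → η ∈ s)

/-- An embedding of `τ`-structures: injective and preserving all atomic
formulas in both directions. -/
def IsEmb (f : ℕ → ℕ) {A B : Type u} (SA : T0Str A) (SB : T0Str B)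
    (g : A → B) : Prop :=
  Function.Injective g ∧
  (∀ a, a ∈ SA.P ↔ g a ∈ SB.P) ∧
  (∀ a, a ∈ SA.Q ↔ g a ∈ SB.Q) ∧
  (∀ η ∈ Tf f, ∀ a, a ∈ SA.Pn η ↔ g a ∈ SB.Pn η) ∧
  (∀ s ∈ Sf f, ∀ a, a ∈ SA.Qs s ↔ g a ∈ SB.Qs s) ∧
  (∀ a b, SA.R a b ↔ SB.R (g a) (g b))

theorem inT_append {f : ℕ → ℕ} {η : List ℕ} {ℓ : ℕ} (h : inT f η) (hl : ℓ ≤ f η.length) :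
    inT f (η ++ [ℓ]) := by
  rintro ⟨i, hi⟩
  simp only [List.get_eq_getElem]
  rw [List.getElem_append]
  split
  · rename_i h1
    exact h ⟨i, h1⟩
  · rename_i h1
    simp only [List.length_append, List.length_singleton] at hi
    have : i = η.length := by omega
    subst this
    simpa using hl

theorem inT_prefix {f : ℕ → ℕ} {η ρ : List ℕ} (h : inT f η) (hp : ρ <+: η) : inT f ρ := by
  obtain ⟨t, rfl⟩ := hp
  rintro ⟨i, hi⟩
  have := h ⟨i, by simp; omega⟩
  simp only [List.get_eq_getElem] at this ⊢
  rwa [List.getElem_append_left hi] at this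

theorem inT_append_zeros {f : ℕ → ℕ} {η : List ℕ} (h : inT f η) (m : ℕ) :
    inT f (η ++ List.replicate m 0) := by
  induction m with
  | zero => simpa using h
  | succ m ih =>
    rw [List.replicate_succ', ← List.append_assoc]
    exact inT_append ih (Nat.zero_le _)

theorem prefix_len_eq {ρ σ τ : List ℕ} (h1 : ρ <+: τ) (h2 : σ <+: τ)
    (h : ρ.length = σ.length) : ρ = σ :=
  (List.prefix_of_prefix_length_le h1 h2 h.le).eq_of_length h

/-- A maximal set omits at most one successor of each of its nodes. -/
theorem Sk_succ {f : ℕ → ℕ} (hf0 : ∀ k, 0 < f k) {k : ℕ} {s : Set (List ℕ)} (hs : s ∈ Sk f k)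
    {ρ : List ℕ} (hρ : ρ ∈ s) (hlen : ρ.length < k) {ℓ ℓ' : ℕ} (hne : ℓ ≠ ℓ')
    (hl : ℓ ≤ f ρ.length) (hl' : ℓ' ≤ f ρ.length) (hns : ρ ++ [ℓ] ∉ s) : ρ ++ [ℓ'] ∈ s := by
  by_contra hns'
  obtain ⟨⟨hsub, hnon, hcl, hmax, hsp⟩, hmx⟩ := hs
  set τ := (ρ ++ [ℓ]) ++ List.replicate (k - ρ.length - 1) 0 with hτ
  have hτlen : τ.length = k := by simp [hτ]; omega
  have hτT : inT f τ := inT_append_zeros (inT_append (hsub hρ).2 hl) _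
  have hρτ : ρ ++ [ℓ] <+: τ := List.prefix_append _ _
  have key := hmx (s ∪ {σ | σ <+: τ}) ⟨?_, ?_, ?_, ?_, ?_⟩ Set.subset_union_left
  · apply hns
    rw [← key]
    exact Or.inr hρτ
  · rintro σ (h | h)
    · exact hsub h
    · exact ⟨hτlen ▸ h.length_le, inT_prefix hτT h⟩
  · exact ⟨ρ, Or.inl hρ⟩
  · rintro σ (h | h) σ' h'
    · exact Or.inl (hcl σ h σ' h')
    · exact Or.inr (h'.trans h)
  · rintro σ (h | h) hm
    · exact hmax σ h fun η hη => hm η (Or.inl hη)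
    · rw [← hm τ (Or.inr (List.prefix_refl τ)) h]
      exact hτlen
  · intro σ hσ hall
    have h1 := hsp σ hσ
    push Not at h1
    obtain ⟨j, hj, hjs⟩ := h1
    have hjτ : σ ++ [j] <+: τ := (hall j hj).resolve_left hjs
    have hστ : σ <+: τ := (List.prefix_append _ _).trans hjτ
    have uniq : ∀ j', σ ++ [j'] <+: τ → j' = j := by
      intro j' h
      have := prefix_len_eq h hjτ (by simp)
      simpa using this
    have hge : ρ.length ≤ σ.length := by
      by_contra hlt
      apply hjs
      refine hcl ρ hρ _ (List.prefix_of_prefix_length_le hjτ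
        ((List.prefix_append _ _).trans hρτ) ?_)
      simp; omega
    rcases hge.eq_or_lt with he | hlt
    · have : ρ = σ := prefix_len_eq ((List.prefix_append _ _).trans hρτ) hστ he
      subst this
      have e1 := uniq ℓ hρτ
      have e2 := uniq ℓ' ((hall ℓ' hl').resolve_left hns')
      exact hne (e1.trans e2.symm)
    · have hp : ρ ++ [ℓ] <+: σ :=
        List.prefix_of_prefix_length_le hρτ hστ (by simp; omega)
      have hno : ∀ j', σ ++ [j'] ∉ s := fun j' h =>
        hns (hcl _ h _ (hp.trans (List.prefix_append _ _)))
      have e1 := uniq 0 ((hall 0 (Nat.zero_le _)).resolve_left (hno 0))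
      have e2 := uniq 1 ((hall 1 (hf0 _)).resolve_left (hno 1))
      omega

/-- The restriction of a `k+1`-maximal set to level `k` is `k`-maximal. -/
theorem Sk_restrict {f : ℕ → ℕ} (hf0 : ∀ k, 0 < f k) {k : ℕ} {s : Set (List ℕ)}
    (hs : s ∈ Sk f (k + 1)) : s ∩ {σ | σ.length ≤ k} ∈ Sk f k := by
  have hs0 := hs
  obtain ⟨⟨hsub, hnon, hcl, hmax, hsp⟩, hmx⟩ := hs
  have hnil : [] ∈ s := by
    obtain ⟨x, hx⟩ := hnon
    exact hcl x hx _ List.nil_prefix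
  refine ⟨⟨?_, ⟨[], hnil, by simp⟩, ?_, ?_, ?_⟩, ?_⟩
  · rintro σ ⟨h, h'⟩
    exact ⟨h', (hsub h).2⟩
  · rintro σ ⟨h, h'⟩ ρ hρ
    exact ⟨hcl σ h ρ hρ, hρ.length_le.trans h'⟩
  · rintro ρ ⟨h, h'⟩ hm
    by_contra hne
    have h'' : ρ.length ≤ k := h'
    have : ρ.length = k + 1 := by
      apply hmax ρ h
      intro η hη hp
      by_contra hneq
      have hlt : ρ.length < η.length := by
        rcases hp.length_le.eq_or_lt with e | e
        · exact absurd (hp.eq_of_length e).symm hneq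
        · exact e
      have hp2 : ρ <+: η.take (ρ.length + 1) :=
        List.prefix_of_prefix_length_le hp (List.take_prefix _ _) (by simp; omega)
      have := hm (η.take (ρ.length + 1)) ⟨hcl η hη _ (List.take_prefix _ _), by simp; omega⟩ hp2
      have := congrArg List.length this
      simp at this
      omega
    omega
  · rintro ρ ⟨hρ, hρ'⟩ hall
    exact hsp ρ ⟨by omega, hρ'⟩ fun ℓ hl => (hall ℓ hl).1
  · rintro s' ⟨hsub', hnon', hcl', hmax', hsp'⟩ hss
    apply Set.Subset.antisymm _ hss
    intro σ hσ
    refine ⟨?_, (hsub' hσ).1⟩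
    induction σ using List.reverseRecOn with
    | nil => exact hnil
    | append_singleton ρ ℓ ih =>
      have hρ' := hcl' _ hσ ρ (List.prefix_append _ _)
      have hρ := ih hρ'
      have hT := hsub' hσ
      have hlen : ρ.length + 1 ≤ k := by simpa using hT.1
      have hl : ℓ ≤ f ρ.length := by
        have := hT.2 ⟨ρ.length, by simp⟩
        simpa using this
      by_contra hns
      apply hsp' ρ (hsub' hρ')
      intro ℓ' hl'
      by_cases he : ℓ = ℓ'
      · exact he ▸ hσ
      · exact hss ⟨Sk_succ hf0 hs0 hρ (by omega) he hl hl' hns, by simpa using hlen⟩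

/-- **Case (b) of quantifier elimination (Claim 2.5)**, as a one-point
extension criterion.  Let `M ⊨ T_{0,f}`, `b_0, …, b_n ∈ Q^M`, `k*` minimal
with `f(k*) > n`, and for each `i ≤ n` let `s_i ∈ 𝒮_{f,k*+1}` be (the unique
element) with `b_i ∈ Q^M_{s_i}`.  Then the following are equivalent:
(i) in some extension `N ⊨ T_{0,f}` of `M` there is `a ∈ P^N` with
`R^N(b_i, a)` for all `i ≤ n`;
(ii) there is `ν ∈ 𝒯_{f,k*+1}` with `ν ∈ s_i` for all `i ≤ n`. -/
theorem qe_case_b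
    (f : ℕ → ℕ) (hf : StrictMono f) (hf0 : ∀ k, 0 < f k)
    (M : Type u) (SM : T0Str M) (hM : IsModelT0 f SM)
    (n : ℕ) (b : ℕ → M) (hb : ∀ i ≤ n, b i ∈ SM.Q)
    (kstar : ℕ) (hk1 : n < f kstar) (hk2 : ∀ j < kstar, f j ≤ n)
    (s : ℕ → Set (List ℕ))
    (hs : ∀ i ≤ n, s i ∈ Sk f (kstar + 1) ∧ b i ∈ SM.Qs (s i)) :
    (∃ (N : Type u) (SN : T0Str N) (ι : M → N),
        IsModelT0 f SN ∧ IsEmb f SM SN ι ∧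
        ∃ a ∈ SN.P, ∀ i ≤ n, SN.R (ι (b i)) a) ↔
    (∃ ν ∈ Tk f (kstar + 1), ∀ i ≤ n, ν ∈ s i) := by
  constructor
  · rintro ⟨N, SN, ι, hN, hE, a, ha, hR⟩
    obtain ⟨_, hP, _, _, _, _, _, hlast⟩ := hN
    rw [← (hP (kstar + 1)).1] at ha
    simp only [Set.mem_iUnion] at ha
    obtain ⟨ν, hν, haν⟩ := ha
    refine ⟨ν, hν, fun i hi => ?_⟩
    refine hlast _ _ (hR i hi) (kstar + 1) (by omega) (s i) (hs i hi).1 ?_ ν hν haν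
    exact (hE.2.2.2.2.1 (s i) ⟨kstar + 1, by omega, (hs i hi).1⟩ (b i)).1 (hs i hi).2
  · rintro ⟨ν, hν, hνs⟩
    have hM0 := hM
    obtain ⟨⟨hPQ, hPQd⟩, hP, hQ, hmP, hmQ, hRQP, hR1, hR2⟩ := hM
    have huniq : ∀ k, 1 ≤ k → ∀ s₁ ∈ Sk f k, ∀ s₂ ∈ Sk f k, ∀ x, x ∈ SM.Qs s₁ → x ∈ SM.Qs s₂ →
        s₁ = s₂ := by
      intro k hk s₁ h₁ s₂ h₂ x hx₁ hx₂
      by_contra hne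
      exact Set.disjoint_left.1 ((hQ k hk).2 s₁ h₁ s₂ h₂ hne) hx₁ hx₂
    have hex : ∀ i k, ∃ t, i ≤ n → 1 ≤ k → t ∈ Sk f k ∧ b i ∈ SM.Qs t := by
      intro i k
      by_cases h : i ≤ n ∧ 1 ≤ k
      · have := hb i h.1
        rw [← (hQ k h.2).1] at this
        simp only [Set.mem_iUnion] at this
        obtain ⟨t, ht, hbt⟩ := this
        exact ⟨t, fun _ _ => ⟨ht, hbt⟩⟩
      · exact ⟨∅, fun h1 h2 => absurd ⟨h1, h2⟩ h⟩
    choose t ht using hex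
    have hstep : ∀ i ≤ n, ∀ k, 1 ≤ k → t i (k + 1) ∩ {σ | σ.length ≤ k} = t i k := by
      intro i hi k hk
      have h1 := ht i (k + 1) hi (by omega)
      have h2 := Sk_restrict hf0 h1.1
      refine huniq k hk _ h2 _ (ht i k hi hk).1 (b i) ?_ (ht i k hi hk).2
      exact hmQ _ ⟨k, hk, h2⟩ _ ⟨k + 1, by omega, h1.1⟩ Set.inter_subset_left h1.2
    have hdown : ∀ i ≤ n, ∀ k, 1 ≤ k → ∀ d, ∀ σ ∈ t i (k + d), σ.length ≤ k → σ ∈ t i k := by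
      intro i hi k hk d
      induction d with
      | zero => intro σ h _; exact h
      | succ d ih =>
        intro σ h hl
        apply ih σ _ hl
        rw [← hstep i hi (k + d) (by omega)]
        exact ⟨h, show σ.length ≤ k + d by omega⟩
    have hext : ∀ m, kstar ≤ m → 1 ≤ m → ∀ ρ ∈ Tk f m, (∀ i ≤ n, ρ ∈ t i m) →
        ∃ ℓ ≤ f m, ∀ i ≤ n, ρ ++ [ℓ] ∈ t i (m + 1) := by
      intro m hm hm1 ρ hρ hρt
      by_contra hcon
      push Not at hcon
      have hcon' : ∀ ℓ, ∃ i, ℓ ≤ f m → i ≤ n ∧ ρ ++ [ℓ] ∉ t i (m + 1) := by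
        intro ℓ
        by_cases h : ℓ ≤ f m
        · obtain ⟨i, hi⟩ := hcon ℓ h
          exact ⟨i, fun _ => hi⟩
        · exact ⟨0, fun h' => absurd h' h⟩
      choose g hg using hcon'
      have hfm : n < f m := lt_of_lt_of_le hk1 (hf.monotone hm)
      obtain ⟨x, hx, y, hy, hxy, hgxy⟩ := Finset.exists_ne_map_eq_of_card_lt_of_maps_to
        (s := Finset.range (f m + 1)) (t := Finset.range (n + 1)) (f := g)
        (by simpa using hfm) (by
          intro ℓ hℓ
          have := (hg ℓ (by simpa [Nat.lt_succ_iff] using hℓ)).1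
          simpa [Nat.lt_succ_iff] using this)
      have hx' : x ≤ f m := by simpa [Nat.lt_succ_iff] using hx
      have hy' : y ≤ f m := by simpa [Nat.lt_succ_iff] using hy
      have h1 := hg x hx'
      have h2 := hg y hy'
      rw [← hgxy] at h2
      apply h2.2
      have hρ1 : ρ ∈ t (g x) (m + 1) := by
        have := hρt (g x) h1.1
        rw [← hstep (g x) h1.1 m hm1] at this
        exact this.1
      exact Sk_succ hf0 (ht (g x) (m + 1) h1.1 (by omega)).1 hρ1 (by rw [hρ.1]; omega) hxy
        (by rw [hρ.1]; exact hx') (by rw [hρ.1]; exact hy') h1.2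
    have hst : ∀ i ≤ n, s i = t i (kstar + 1) := fun i hi =>
      huniq (kstar + 1) (by omega) _ (hs i hi).1 _ (ht i _ hi (by omega)).1 (b i) (hs i hi).2
        (ht i _ hi (by omega)).2
    have hLs : ∀ m (ρ : List ℕ), ∃ ρ' : List ℕ,
        (ρ ∈ Tk f (kstar + 1 + m) ∧ ∀ i ≤ n, ρ ∈ t i (kstar + 1 + m)) →
        ρ <+: ρ' ∧ (ρ' ∈ Tk f (kstar + 1 + (m + 1)) ∧ ∀ i ≤ n, ρ' ∈ t i (kstar + 1 + (m + 1))) := by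
      intro m ρ
      by_cases h : ρ ∈ Tk f (kstar + 1 + m) ∧ ∀ i ≤ n, ρ ∈ t i (kstar + 1 + m)
      · obtain ⟨ℓ, hl, hall⟩ := hext (kstar + 1 + m) (by omega) (by omega) ρ h.1 h.2
        refine ⟨ρ ++ [ℓ], fun _ => ⟨List.prefix_append _ _, ⟨?_, ?_⟩, hall⟩⟩
        · simp [h.1.1]; omega
        · exact inT_append h.1.2 (by rw [h.1.1]; exact hl)
      · exact ⟨ρ, fun h' => absurd h' h⟩
    choose nxt hnxt using hLs
    let L : ℕ → List ℕ := fun m => Nat.rec ν (fun m ρ => nxt m ρ) m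
    have hL : ∀ m, L m ∈ Tk f (kstar + 1 + m) ∧ ∀ i ≤ n, L m ∈ t i (kstar + 1 + m) := by
      intro m
      induction m with
      | zero => exact ⟨hν, fun i hi => hst i hi ▸ hνs i hi⟩
      | succ m ih => exact (hnxt m (L m) ih).2
    have hLmono : ∀ m d, L m <+: L (m + d) := by
      intro m d
      induction d with
      | zero => exact List.prefix_refl _
      | succ d ih => exact ih.trans (hnxt (m + d) (L (m + d)) (hL (m + d))).1
    let B : Set (List ℕ) := {σ | ∃ m, σ <+: L m}
    have hBcl : ∀ σ ∈ B, ∀ ρ, ρ <+: σ → ρ ∈ B := fun σ ⟨m, hm⟩ ρ h => ⟨m, h.trans hm⟩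
    have hBuniq : ∀ σ ∈ B, ∀ σ' ∈ B, σ.length = σ'.length → σ = σ' := by
      rintro σ ⟨m, hm⟩ σ' ⟨m', hm'⟩ h
      refine prefix_len_eq (hm.trans (hLmono m m')) (hm'.trans ?_) h
      rw [Nat.add_comm]
      exact hLmono m' m
    have hBex : ∀ k, ∃ σ ∈ B, σ ∈ Tk f k := by
      intro k
      refine ⟨(L k).take k, ⟨k, List.take_prefix _ _⟩, ?_, inT_prefix (hL k).1.2 (List.take_prefix _ _)⟩
      have := (hL k).1.1
      simp; omega
    have hBt : ∀ k, 1 ≤ k → ∀ σ ∈ B, σ.length = k → ∀ i ≤ n, σ ∈ t i k := by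
      rintro k hk σ ⟨m, hm⟩ hlen i hi
      have h1 := (ht i (kstar + 1 + m) hi (by omega)).1.1.2.2.1 _ ((hL m).2 i hi) σ hm
      have h2 : k ≤ kstar + 1 + m := by
        have := hm.length_le
        rw [(hL m).1.1] at this
        omega
      obtain ⟨d, hd⟩ := Nat.exists_eq_add_of_le h2
      rw [hd] at h1
      exact hdown i hi k hk d σ h1 hlen.le
    let SN : T0Str (Option M) :=
      { P := {x | ∀ y, x = some y → y ∈ SM.P}
        Q := {x | ∃ y, x = some y ∧ y ∈ SM.Q}
        Pn := fun η => {x | (∃ y, x = some y ∧ y ∈ SM.Pn η) ∨ (x = none ∧ η ∈ B)}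
        Qs := fun s => {x | ∃ y, x = some y ∧ y ∈ SM.Qs s}
        R := fun x z => ∃ y, x = some y ∧
          ((∃ w, z = some w ∧ SM.R y w) ∨ (z = none ∧ ∃ i ≤ n, y = b i)) }
    have hPc : ∀ x, x ∈ SM.P ↔ some x ∈ SN.P := by
      intro x; simp [SN]
    have hQc : ∀ x, x ∈ SM.Q ↔ some x ∈ SN.Q := by
      intro x; simp [SN]
    have hPnc : ∀ η x, x ∈ SM.Pn η ↔ some x ∈ SN.Pn η := by
      intro η x; simp [SN]
    have hQsc : ∀ η x, x ∈ SM.Qs η ↔ some x ∈ SN.Qs η := by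
      intro η x; simp [SN]
    have hRc : ∀ x y, SM.R x y ↔ SN.R (some x) (some y) := by
      intro x y; simp [SN]
    have hPn0 : ∀ η, none ∈ SN.Pn η ↔ η ∈ B := by
      intro η; simp [SN]
    have hP0 : none ∈ SN.P := by simp [SN]
    have hQ0 : none ∉ SN.Q := by simp [SN]
    have hQs0 : ∀ η, none ∉ SN.Qs η := by intro η; simp [SN]
    have hR0 : ∀ x, SN.R (some x) none ↔ ∃ i ≤ n, x = b i := by
      intro x; simp [SN]
    have hR00 : ∀ x, ¬ SN.R none x := by
      intro x; simp [SN]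
    clear_value SN
    have hlast : ∀ b a, SN.R b a → ∀ k, 1 ≤ k → ∀ s ∈ Sk f k, b ∈ SN.Qs s →
        ∀ η ∈ Tk f k, a ∈ SN.Pn η → η ∈ s := by
      intro x a hR k hk u hu hxu η hη ha
      rcases x with _ | x
      · exact absurd hR (hR00 _)
      rw [← hQsc] at hxu
      rcases a with _ | a
      · obtain ⟨i, hi, rfl⟩ := (hR0 x).1 hR
        rw [hPn0] at ha
        rw [huniq k hk u hu _ (ht i k hi hk).1 _ hxu (ht i k hi hk).2]
        exact hBt k hk η ha hη.1 i hi
      · rw [← hRc] at hR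
        rw [← hPnc] at ha
        exact hR2 _ _ hR k hk u hu hxu η hη ha
    have hQN : ∀ k, 1 ≤ k → (⋃ s ∈ Sk f k, SN.Qs s) = SN.Q := by
      intro k hk
      ext x
      rcases x with _ | x
      · simp [hQs0, hQ0]
      · rw [← hQc, ← (hQ k hk).1]
        simp [← hQsc]
    refine ⟨Option M, SN, some, ⟨⟨?_, ?_⟩, ?_, ?_, ?_, ?_, ?_, ?_, hlast⟩,
      ⟨Option.some_injective _, hPc, hQc, fun η _ => hPnc η, fun η _ => hQsc η, hRc⟩,
      none, hP0, fun i hi => (hR0 _).2 ⟨i, hi, rfl⟩⟩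
    · ext x
      rcases x with _ | x
      · simp [hP0]
      · have : x ∈ SM.P ∪ SM.Q := hPQ ▸ Set.mem_univ x
        simpa [← hPc, ← hQc] using this
    · rw [Set.disjoint_left]
      rintro (_ | x) h1 h2
      · exact hQ0 h2
      · exact Set.disjoint_left.1 hPQd ((hPc x).2 h1) ((hQc x).2 h2)
    · intro k
      constructor
      · ext x
        rcases x with _ | x
        · obtain ⟨σ, hσ, hσT⟩ := hBex k
          simp only [Set.mem_iUnion, hP0, iff_true]
          exact ⟨σ, hσT, (hPn0 σ).2 hσ⟩
        · rw [← hPc, ← (hP k).1]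
          simp [← hPnc]
      · intro η hη η' hη' hne
        rw [Set.disjoint_left]
        rintro (_ | x) h1 h2
        · exact hne (hBuniq η ((hPn0 _).1 h1) η' ((hPn0 _).1 h2) (hη.1.trans hη'.1.symm))
        · exact Set.disjoint_left.1 ((hP k).2 η hη η' hη' hne) ((hPnc _ x).2 h1) ((hPnc _ x).2 h2)
    · intro k hk
      refine ⟨hQN k hk, ?_⟩
      intro η hη η' hη' hne
      rw [Set.disjoint_left]
      rintro (_ | x) h1 h2
      · exact hQs0 _ h1
      · exact Set.disjoint_left.1 ((hQ k hk).2 η hη η' hη' hne) ((hQsc _ x).2 h1) ((hQsc _ x).2 h2)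
    · rintro η hη η' hη' hp (_ | x) hx
      · exact (hPn0 _).2 (hBcl _ ((hPn0 _).1 hx) _ hp)
      · exact (hPnc _ _).1 (hmP η hη η' hη' hp ((hPnc _ _).2 hx))
    · rintro u hu u' hu' hp (_ | x) hx
      · exact absurd hx (hQs0 _)
      · exact (hQsc _ _).1 (hmQ u hu u' hu' hp ((hQsc _ _).2 hx))
    · rintro (_ | x) (_ | y) h
      · exact absurd h (hR00 _)
      · exact absurd h (hR00 _)
      · obtain ⟨i, hi, rfl⟩ := (hR0 x).1 h
        exact ⟨(hQc _).1 (hb i hi), hP0⟩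
      · have := hRQP _ _ ((hRc _ _).2 h)
        exact ⟨(hQc _).1 this.1, (hPc _).1 this.2⟩
    · rintro k η hη bv hbv ⟨x, hx, hxR⟩
      rw [← hQN (k + 1) (by omega)] at hx
      simp only [Set.mem_iUnion] at hx
      obtain ⟨u, hu, hxu⟩ := hx
      apply hu.1.2.2.2.2 η ⟨by rw [hη.1]; omega, hη.2⟩
      intro ℓ hl
      rw [hη.1] at hl
      refine hlast x (bv ℓ) (hxR ℓ hl) (k + 1) (by omega) u hu hxu _ ⟨?_, ?_⟩ (hbv ℓ hl)
      · simp [hη.1]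
      · exact inT_append hη.2 (by rw [hη.1]; exact hl)
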